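/- Fix ν > 0, L₁, L₂ > 0 and D ≥ (2√2 L₁/L₂)^{1/ν}. Let s* ∈ Λ_ν(L₁, L₂) and let s_m = Σ_{k=1}^D β_k(s*) φ_k be its orthogonal projection onto the span m of the first D trigonometric basis functions. Then ‖s* − s_m‖∞ ≤ √2 L₁ / D^ν ≤ L₂/2, ‖s_m‖∞ ≥ L₂/2, and s_m ∈ Λ_ν(L₁, L₂/2). -/

import Mathlib

open MeasureTheory
open scoped ENNReal

/-- The uniform probability distribution on `[0, 2π]`. -/
noncomputable def unif : Measure ℝ :=
  (ENNReal.ofReal (2 * Real.pi))⁻¹ • (volume.restrict (Set.Icc 0 (2 * Real.pi)))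

/-- The trigonometric orthonormal basis of `L²` of the uniform distribution on
`[0, 2π]`: `φ₁ ≡ 1`, `φ_{2k}(x) = √2 cos(kx)`, `φ_{2k+1}(x) = √2 sin(kx)`, `k ≥ 1`. -/
noncomputable def phi (j : ℕ) (x : ℝ) : ℝ :=
  if j = 1 then 1
  else if Even j then Real.sqrt 2 * Real.cos ((j / 2 : ℕ) * x)
  else Real.sqrt 2 * Real.sin ((j / 2 : ℕ) * x)

/-- The `k`-th Fourier coefficient `β_k(f) = ⟨f, φ_k⟩` of `f`. -/
noncomputable def fourierCoef (f : ℝ → ℝ) (k : ℕ) : ℝ :=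
  ∫ x, f x * phi k x ∂unif

/-- The orthogonal projection `s_m = ∑_{k=1}^D β_k(f) φ_k` of `f` onto the span of
the first `D` trigonometric basis functions. -/
noncomputable def trigProj (D : ℕ) (f : ℝ → ℝ) : ℝ → ℝ :=
  fun x => ∑ k ∈ Finset.Icc 1 D, fourierCoef f k * phi k x

theorem unif_integral (f : ℝ → ℝ) :
    ∫ x, f x ∂unif = (2 * Real.pi)⁻¹ * ∫ x in (0:ℝ)..(2 * Real.pi), f x := by
  have hp : 0 < 2 * Real.pi := Real.two_pi_pos
  unfold unif
  rw [integral_smul_measure, intervalIntegral.integral_of_le hp.le, integral_Icc_eq_integral_Ioc,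
    ENNReal.toReal_inv, ENNReal.toReal_ofReal hp.le, smul_eq_mul]

instance unif_prob : IsProbabilityMeasure unif := by
  constructor
  have hp : 0 < 2 * Real.pi := Real.two_pi_pos
  unfold unif
  simp only [Measure.smul_apply, Measure.restrict_apply_univ, Real.volume_Icc, sub_zero, smul_eq_mul]
  exact ENNReal.inv_mul_cancel (by simpa using Real.pi_pos) ENNReal.ofReal_ne_top

theorem phi_cases (j : ℕ) (hj : 1 ≤ j) :
    (j = 1 ∧ phi j = fun _ => 1) ∨
    (∃ a : ℕ, 1 ≤ a ∧ j = 2 * a ∧ phi j = fun x => √2 * Real.cos (a * x)) ∨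
    (∃ a : ℕ, 1 ≤ a ∧ j = 2 * a + 1 ∧ phi j = fun x => √2 * Real.sin (a * x)) := by
  by_cases h1 : j = 1
  · left
    refine ⟨h1, ?_⟩
    funext x
    simp [phi, h1]
  · right
    rcases Nat.even_or_odd' j with ⟨a, rfl | rfl⟩
    · left
      refine ⟨a, by omega, rfl, ?_⟩
      funext x
      simp [phi]
    · right
      refine ⟨a, by omega, rfl, ?_⟩
      funext x
      have : (2 * a + 1) / 2 = a := by omega
      have ha : a ≠ 0 := by omega
      simp [phi, this, ha]

theorem phi_cont (j : ℕ) : Continuous (phi j) := by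
  unfold phi
  split_ifs <;> fun_prop

theorem phi_bound (j : ℕ) (x : ℝ) : |phi j x| ≤ √2 := by
  unfold phi
  split_ifs
  · rw [abs_one]; exact Real.one_le_sqrt.2 (by norm_num)
  · rw [abs_mul, abs_of_nonneg (Real.sqrt_nonneg _)]
    exact mul_le_of_le_one_right (Real.sqrt_nonneg _) (Real.abs_cos_le_one _)
  · rw [abs_mul, abs_of_nonneg (Real.sqrt_nonneg _)]
    exact mul_le_of_le_one_right (Real.sqrt_nonneg _) (Real.abs_sin_le_one _)

theorem int_cos (n : ℤ) :
    ∫ x in (0:ℝ)..(2 * Real.pi), Real.cos (n * x) = if n = 0 then 2 * Real.pi else 0 := by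
  split_ifs with h
  · simp [h]
  · have h' : (n : ℝ) ≠ 0 := by exact_mod_cast h
    rw [intervalIntegral.integral_comp_mul_left (fun x => Real.cos x) h', integral_cos]
    have : Real.sin (n * (2 * Real.pi)) = 0 := by
      have := Real.sin_int_mul_pi (n * 2)
      push_cast at this
      rw [← this]; ring_nf
    simp [this]

theorem int_sin (n : ℤ) :
    ∫ x in (0:ℝ)..(2 * Real.pi), Real.sin (n * x) = 0 := by
  by_cases h : n = 0
  · simp [h]
  · have h' : (n : ℝ) ≠ 0 := by exact_mod_cast h
    rw [intervalIntegral.integral_comp_mul_left (fun x => Real.sin x) h', integral_sin]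
    simp [Real.cos_int_mul_two_pi]

theorem int_cc (a b : ℕ) : ∫ x in (0:ℝ)..(2 * Real.pi),
    (√2 * Real.cos (a * x)) * (√2 * Real.cos (b * x)) =
    (if (a:ℤ) - b = 0 then 2 * Real.pi else 0) + (if (a:ℤ) + b = 0 then 2 * Real.pi else 0) := by
  rw [← int_cos, ← int_cos, ← intervalIntegral.integral_add]
  · congr 1; funext x
    push_cast
    rw [sub_mul, add_mul, Real.cos_sub, Real.cos_add]
    linear_combination (Real.cos (a * x) * Real.cos (b * x)) * Real.mul_self_sqrt (show (0:ℝ) ≤ 2 by norm_num)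
  all_goals exact Continuous.intervalIntegrable (by fun_prop) _ _

theorem int_ss (a b : ℕ) : ∫ x in (0:ℝ)..(2 * Real.pi),
    (√2 * Real.sin (a * x)) * (√2 * Real.sin (b * x)) =
    (if (a:ℤ) - b = 0 then 2 * Real.pi else 0) - (if (a:ℤ) + b = 0 then 2 * Real.pi else 0) := by
  rw [← int_cos, ← int_cos, ← intervalIntegral.integral_sub]
  · congr 1; funext x
    push_cast
    rw [sub_mul, add_mul, Real.cos_sub, Real.cos_add]
    linear_combination (Real.sin (a * x) * Real.sin (b * x)) * Real.mul_self_sqrt (show (0:ℝ) ≤ 2 by norm_num)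
  all_goals exact Continuous.intervalIntegrable (by fun_prop) _ _

theorem int_sc (a b : ℕ) : ∫ x in (0:ℝ)..(2 * Real.pi),
    (√2 * Real.sin (a * x)) * (√2 * Real.cos (b * x)) = 0 := by
  have : (0:ℝ) = (∫ x in (0:ℝ)..(2 * Real.pi), Real.sin (((a + b : ℤ) : ℝ) * x)) +
    ∫ x in (0:ℝ)..(2 * Real.pi), Real.sin (((a - b : ℤ) : ℝ) * x) := by
    rw [int_sin, int_sin, add_zero]
  refine Eq.trans ?_ this.symm
  rw [← intervalIntegral.integral_add]
  · congr 1; funext x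
    push_cast
    rw [sub_mul, add_mul, Real.sin_sub, Real.sin_add]
    linear_combination (Real.sin (a * x) * Real.cos (b * x)) * Real.mul_self_sqrt (show (0:ℝ) ≤ 2 by norm_num)
  all_goals exact Continuous.intervalIntegrable (by fun_prop) _ _

theorem int_c (a : ℕ) (ha : 1 ≤ a) :
    ∫ x in (0:ℝ)..(2 * Real.pi), √2 * Real.cos (a * x) = 0 := by
  rw [intervalIntegral.integral_const_mul]
  have := int_cos a
  rw [if_neg (by omega)] at this
  push_cast at this
  rw [this, mul_zero]

theorem int_s (a : ℕ) :
    ∫ x in (0:ℝ)..(2 * Real.pi), √2 * Real.sin (a * x) = 0 := by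
  rw [intervalIntegral.integral_const_mul]
  have := int_sin a
  push_cast at this
  rw [this, mul_zero]

theorem phi_orth (j k : ℕ) (hj : 1 ≤ j) (hk : 1 ≤ k) :
    ∫ x, phi j x * phi k x ∂unif = if j = k then 1 else 0 := by
  have hp : 2 * Real.pi ≠ 0 := Real.two_pi_pos.ne'
  rw [unif_integral]
  rcases phi_cases j hj with ⟨rfl, h⟩ | ⟨a, ha, rfl, h⟩ | ⟨a, ha, rfl, h⟩ <;>
  rcases phi_cases k hk with ⟨rfl, h'⟩ | ⟨b, hb, rfl, h'⟩ | ⟨b, hb, rfl, h'⟩ <;>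
  simp only [h, h']
  · simp; field_simp
  · simp only [one_mul]; rw [int_c b hb, if_neg (by omega), mul_zero]
  · simp only [one_mul]; rw [int_s b, if_neg (by omega), mul_zero]
  · simp only [mul_one]; rw [int_c a ha, if_neg (by omega), mul_zero]
  · rw [int_cc, if_neg (show ¬ ((a:ℤ) + b = 0) by omega)]
    by_cases hab : a = b
    · rw [if_pos (by omega), if_pos (by omega), add_zero, inv_mul_cancel₀ hp]
    · rw [if_neg (by omega), if_neg (by omega), add_zero, mul_zero]
  · rw [if_neg (by omega)]
    simp_rw [mul_comm (√2 * Real.cos _)]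
    rw [int_sc, mul_zero]
  · simp only [mul_one]; rw [int_s a, if_neg (by omega), mul_zero]
  · rw [if_neg (by omega), int_sc, mul_zero]
  · rw [int_ss, if_neg (show ¬ ((a:ℤ) + b = 0) by omega)]
    by_cases hab : a = b
    · rw [if_pos (by omega), if_pos (by omega), sub_zero, inv_mul_cancel₀ hp]
    · rw [if_neg (by omega), if_neg (by omega), sub_zero, mul_zero]

theorem complete_aux (h : ℝ → ℝ) (hh : MemLp h ∞ unif)
    (h0 : ∀ k, 1 ≤ k → ∫ x, h x * phi k x ∂unif = 0) : h =ᵐ[unif] 0 := by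
  have hp : 0 < 2 * Real.pi := Real.two_pi_pos
  have hc : (ENNReal.ofReal (2 * Real.pi))⁻¹ ≠ 0 := ENNReal.inv_ne_zero.2 ENNReal.ofReal_ne_top
  have hc' : (ENNReal.ofReal (2 * Real.pi))⁻¹ ≠ ∞ :=
    ENNReal.inv_ne_top.2 (by simpa using Real.pi_pos)
  have hh2 : MemLp h 2 (volume.restrict (Set.Ioc 0 (2 * Real.pi))) := by
    have h1 : MemLp h 2 unif := hh.mono_exponent le_top
    rw [Measure.restrict_congr_set Ioc_ae_eq_Icc]
    have h2 := h1.smul_measure (ENNReal.ofReal_ne_top (r := 2 * Real.pi))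
    unfold unif at h2
    rwa [smul_smul, ENNReal.mul_inv_cancel (by simpa using Real.pi_pos) ENNReal.ofReal_ne_top,
      one_smul] at h2
  have hint : IntervalIntegrable h volume 0 (2 * Real.pi) := by
    rw [intervalIntegrable_iff_integrableOn_Ioc_of_le hp.le]
    exact hh2.integrable (by norm_num)
  have h1 : ∀ k, 1 ≤ k → ∫ x in (0:ℝ)..(2 * Real.pi), h x * phi k x = 0 := by
    intro k hk
    have := h0 k hk
    rw [unif_integral] at this
    exact (mul_eq_zero.1 this).resolve_left (inv_ne_zero hp.ne')
  have hofR : ∀ c : ℝ → ℝ, Continuous c →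
      IntervalIntegrable (fun x => ((h x * c x : ℝ) : ℂ)) volume 0 (2 * Real.pi) := by
    intro c hcc
    have hi : IntervalIntegrable (fun x => h x * c x) volume 0 (2 * Real.pi) :=
      hint.mul_continuousOn hcc.continuousOn
    exact ⟨Integrable.ofReal hi.1, Integrable.ofReal hi.2⟩
  have hs2 : √2 ≠ 0 := by positivity
  have hcos : ∀ a : ℕ, ∫ x in (0:ℝ)..(2 * Real.pi), h x * Real.cos (a * x) = 0 := by
    intro a
    rcases Nat.eq_zero_or_pos a with rfl | ha
    · have := h1 1 le_rfl
      simpa [phi] using this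
    · have := h1 (2 * a) (by omega)
      simp only [phi, show 2 * a ≠ 1 by omega, if_false, even_two_mul, if_true,
        show 2 * a / 2 = a by omega] at this
      simp_rw [mul_left_comm _ (√2)] at this
      rw [intervalIntegral.integral_const_mul] at this
      exact (mul_eq_zero.1 this).resolve_left hs2
  have hsin : ∀ a : ℕ, ∫ x in (0:ℝ)..(2 * Real.pi), h x * Real.sin (a * x) = 0 := by
    intro a
    rcases Nat.eq_zero_or_pos a with rfl | ha
    · simp
    · have := h1 (2 * a + 1) (by omega)
      simp only [phi, show 2 * a + 1 ≠ 1 by omega, if_false,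
        show ¬ Even (2 * a + 1) by simp,
        show (2 * a + 1) / 2 = a by omega] at this
      simp_rw [mul_left_comm _ (√2)] at this
      rw [intervalIntegral.integral_const_mul] at this
      exact (mul_eq_zero.1 this).resolve_left hs2
  have hcosz : ∀ n : ℤ, ∫ x in (0:ℝ)..(2 * Real.pi), h x * Real.cos (n * x) = 0 := by
    intro n
    obtain ⟨a, rfl | rfl⟩ := n.eq_nat_or_neg
    · simpa using hcos a
    · simpa using hcos a
  have hsinz : ∀ n : ℤ, ∫ x in (0:ℝ)..(2 * Real.pi), h x * Real.sin (n * x) = 0 := by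
    intro n
    obtain ⟨a, rfl | rfl⟩ := n.eq_nat_or_neg
    · simpa using hsin a
    · simpa using hsin a
  have hcoef : ∀ n : ℤ, fourierCoeffOn hp (fun x => (h x : ℂ)) n = 0 := by
    intro n
    rw [fourierCoeffOn_eq_integral]
    have e : ∀ x : ℝ, fourier (-n) (x : AddCircle (2 * Real.pi - 0)) • (h x : ℂ) =
        ((h x * Real.cos ((-n : ℤ) * x) : ℝ) : ℂ) +
        ((h x * Real.sin ((-n : ℤ) * x) : ℝ) : ℂ) * Complex.I := by
      intro x
      rw [fourier_coe_apply]
      have : 2 * (Real.pi : ℂ) * Complex.I * ((-n : ℤ) : ℂ) * x / ((2 * Real.pi - 0 : ℝ) : ℂ) =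
          (((-n : ℤ) * x : ℝ) : ℂ) * Complex.I := by
        have : (Real.pi : ℂ) ≠ 0 := by exact_mod_cast Real.pi_ne_zero
        push_cast
        rw [sub_zero]
        field_simp
      rw [this, Complex.exp_mul_I, ← Complex.ofReal_cos, ← Complex.ofReal_sin, smul_eq_mul]
      push_cast
      ring
    simp_rw [e]
    rw [intervalIntegral.integral_add, intervalIntegral.integral_mul_const,
      intervalIntegral.integral_ofReal, intervalIntegral.integral_ofReal, hcosz, hsinz]
    · simp
    · exact hofR _ (by fun_prop)
    · exact (hofR _ (by fun_prop)).mul_const _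
  have key := tsum_sq_fourierCoeffOn hp (f := fun x => (h x : ℂ)) hh2.ofReal
  simp only [hcoef, norm_zero, ne_eq, OfNat.ofNat_ne_zero, not_false_eq_true, zero_pow, tsum_zero,
    sub_zero, smul_eq_mul] at key
  have k2 := (mul_eq_zero.1 key.symm).resolve_left (inv_ne_zero hp.ne')
  rw [intervalIntegral.integral_of_le hp.le, integral_eq_zero_iff_of_nonneg] at k2
  · unfold unif
    have : h =ᵐ[volume.restrict (Set.Icc 0 (2 * Real.pi))] 0 := by
      rw [← Measure.restrict_congr_set Ioc_ae_eq_Icc]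
      filter_upwards [k2] with x hx
      simpa using hx
    exact Measure.ae_smul_measure this _
  · intro x; positivity
  · simpa using hh2.integrable_sq

theorem main_aux (s : ℝ → ℝ) (hs : MemLp s ∞ unif)
    (hsum : Summable fun k : ℕ => |fourierCoef s (k + 1)|) :
    ∀ᵐ x ∂unif, s x = ∑' k : ℕ, fourierCoef s (k + 1) * phi (k + 1) x := by
  have hb : ∀ (k : ℕ) (x : ℝ), ‖fourierCoef s (k + 1) * phi (k + 1) x‖ ≤
      |fourierCoef s (k + 1)| * √2 := by
    intro k x
    rw [norm_mul]
    exact mul_le_mul_of_nonneg_left (phi_bound _ _) (abs_nonneg _)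
  have hsum2 := hsum.mul_right (√2)
  have hcont : Continuous fun x => ∑' k : ℕ, fourierCoef s (k + 1) * phi (k + 1) x :=
    continuous_tsum (fun k => continuous_const.mul (phi_cont _)) hsum2 hb
  set g : ℝ → ℝ := fun x => ∑' k : ℕ, fourierCoef s (k + 1) * phi (k + 1) x with hg
  have hgb : ∀ x, ‖g x‖ ≤ ∑' k : ℕ, |fourierCoef s (k + 1)| * √2 := fun x =>
    tsum_of_norm_bounded hsum2.hasSum (fun k => hb k x)
  have hgL : MemLp g ∞ unif :=
    memLp_top_of_bound hcont.aestronglyMeasurable _ (Filter.Eventually.of_forall hgb)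
  have hpL : ∀ k, MemLp (phi k) ∞ unif := fun k =>
    memLp_top_of_bound (phi_cont k).aestronglyMeasurable _
      (Filter.Eventually.of_forall (phi_bound k))
  have hI : ∀ (f : ℝ → ℝ), MemLp f ∞ unif → ∀ k, Integrable (fun x => f x * phi k x) unif := by
    intro f hf k
    exact (MemLp.mul (p := ∞) (q := ∞) (r := ∞) (hpL k) hf).integrable le_top
  have h0 := complete_aux (fun x => s x - g x) (hs.sub hgL) (by
    intro j hj
    simp_rw [sub_mul]
    rw [integral_sub (hI s hs j) (hI g hgL j)]
    have hF := hasSum_integral_of_summable_integral_norm (μ := unif)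
      (F := fun (k : ℕ) x => fourierCoef s (k + 1) * (phi (k + 1) x * phi j x)) (by
        intro k
        exact (hI _ (hpL (k+1)) j).const_mul _) (by
        refine Summable.of_nonneg_of_le (fun k => integral_nonneg fun x => norm_nonneg _)
          (fun k => ?_) (hsum.mul_right (√2 * √2))
        have : ∀ x, ‖fourierCoef s (k + 1) * (phi (k + 1) x * phi j x)‖ ≤
            |fourierCoef s (k + 1)| * (√2 * √2) := by
          intro x
          rw [norm_mul, norm_mul]
          exact mul_le_mul_of_nonneg_left (mul_le_mul (phi_bound _ _) (phi_bound _ _)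
            (abs_nonneg _) (Real.sqrt_nonneg _)) (abs_nonneg _)
        refine (integral_mono ((hI _ (hpL (k+1)) j).const_mul _).norm
          (integrable_const _) this).trans ?_
        simp)
    have e : ∀ x, ∑' k : ℕ, fourierCoef s (k + 1) * (phi (k + 1) x * phi j x) =
        g x * phi j x := by
      intro x
      rw [hg, ← tsum_mul_right]
      simp_rw [mul_assoc]
    simp_rw [e, integral_const_mul] at hF
    rw [← hF.tsum_eq, tsum_eq_single (j - 1)]
    · rw [Nat.sub_add_cancel hj, phi_orth j j hj hj, if_pos rfl, mul_one]
      exact sub_self _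
    · intro k hk
      rw [phi_orth _ _ (by omega) hj, if_neg (by omega), mul_zero])
  filter_upwards [h0] with x hx
  exact sub_eq_zero.1 hx

theorem coef_proj (D : ℕ) (s : ℝ → ℝ) (j : ℕ) (hj : 1 ≤ j) :
    fourierCoef (trigProj D s) j = if j ≤ D then fourierCoef s j else 0 := by
  have hpL : ∀ k, MemLp (phi k) ∞ unif := fun k =>
    memLp_top_of_bound (phi_cont k).aestronglyMeasurable _
      (Filter.Eventually.of_forall (phi_bound k))
  have hI : ∀ i k, Integrable (fun x => phi i x * phi k x) unif := by
    intro i k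
    exact (MemLp.mul (p := ∞) (q := ∞) (r := ∞) (hpL k) (hpL i)).integrable le_top
  rw [fourierCoef]
  simp only [trigProj, Finset.sum_mul, mul_assoc]
  rw [integral_finsetSum _ (fun i _ => (hI i j).const_mul _)]
  simp_rw [integral_const_mul]
  rw [Finset.sum_congr rfl (g := fun i => if i = j then fourierCoef s j else 0)]
  · rw [Finset.sum_ite_eq']
    simp [hj]
  · intro i hi
    rw [phi_orth i j (Finset.mem_Icc.1 hi).1 hj]
    split_ifs with h
    · rw [h, mul_one]
    · rw [mul_zero]

/-- Fix `ν > 0`, `L₁, L₂ > 0`, `D ≥ (2√2 L₁/L₂)^{1/ν}`, let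
`s* ∈ Λ_ν(L₁, L₂)` and let `s_m` be its projection onto the span of the first `D`
trigonometric basis functions. Then `‖s* - s_m‖_∞ ≤ √2 L₁ / D^ν ≤ L₂/2`,
`‖s_m‖_∞ ≥ L₂/2` and `s_m ∈ Λ_ν(L₁, L₂/2)`. -/
theorem trig_projection_of_Lambda (ν L₁ L₂ : ℝ) (hν : 0 < ν) (hL₁ : 0 < L₁) (hL₂ : 0 < L₂)
    (D : ℕ) (hD : (2 * Real.sqrt 2 * L₁ / L₂) ^ ((1 : ℝ) / ν) ≤ (D : ℝ))
    (s : ℝ → ℝ) (hs_meas : Measurable s) (hs_bdd : MemLp s ∞ unif)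
    (hs_sum : Summable fun k : ℕ => ((k + 1 : ℕ) : ℝ) ^ ν * |fourierCoef s (k + 1)|)
    (hs_L₁ : (∑' k : ℕ, ((k + 1 : ℕ) : ℝ) ^ ν * |fourierCoef s (k + 1)|) ≤ L₁)
    (hs_L₂ : L₂ ≤ (eLpNorm s ∞ unif).toReal) :
    (eLpNorm (fun x => s x - trigProj D s x) ∞ unif).toReal ≤
        Real.sqrt 2 * L₁ / (D : ℝ) ^ ν ∧
      Real.sqrt 2 * L₁ / (D : ℝ) ^ ν ≤ L₂ / 2 ∧
      L₂ / 2 ≤ (eLpNorm (trigProj D s) ∞ unif).toReal ∧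
      Summable (fun k : ℕ => ((k + 1 : ℕ) : ℝ) ^ ν * |fourierCoef (trigProj D s) (k + 1)|) ∧
      (∑' k : ℕ, ((k + 1 : ℕ) : ℝ) ^ ν * |fourierCoef (trigProj D s) (k + 1)|) ≤ L₁ := by
  have hA : 0 < 2 * √2 * L₁ / L₂ := by positivity
  have hD0 : (0:ℝ) < D := (Real.rpow_pos_of_pos hA _).trans_le hD
  have hDν : 0 < (D:ℝ) ^ ν := Real.rpow_pos_of_pos hD0 _
  have hAD : 2 * √2 * L₁ / L₂ ≤ (D:ℝ) ^ ν := by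
    have := Real.rpow_le_rpow (Real.rpow_nonneg hA.le _) hD hν.le
    rwa [← Real.rpow_mul hA.le, one_div, inv_mul_cancel₀ hν.ne', Real.rpow_one] at this
  have h2 : √2 * L₁ / (D : ℝ) ^ ν ≤ L₂ / 2 := by
    rw [div_le_iff₀ hL₂] at hAD
    rw [div_le_div_iff₀ hDν two_pos]
    linarith
  have hone : ∀ k : ℕ, (1:ℝ) ≤ ((k + 1 : ℕ) : ℝ) ^ ν := fun k =>
    Real.one_le_rpow (by push_cast; linarith [(Nat.cast_nonneg k : (0:ℝ) ≤ k)]) hν.le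
  have hsum : Summable fun k : ℕ => |fourierCoef s (k + 1)| :=
    Summable.of_nonneg_of_le (fun k => abs_nonneg _)
      (fun k => le_mul_of_one_le_left (abs_nonneg _) (hone k)) hs_sum
  have hae := main_aux s hs_bdd hsum
  have hproj : ∀ x, trigProj D s x =
      ∑ k ∈ Finset.range D, fourierCoef s (k + 1) * phi (k + 1) x := by
    intro x
    rw [trigProj, Finset.range_eq_Ico, Finset.sum_Ico_add' (fun k => fourierCoef s k * phi k x)]
    rfl
  have hptw : ∀ᵐ x ∂unif, ‖s x - trigProj D s x‖ ≤ √2 * L₁ / (D : ℝ) ^ ν := by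
    filter_upwards [hae] with x hx
    have hb : ∀ k : ℕ, ‖fourierCoef s (k + 1) * phi (k + 1) x‖ ≤
        |fourierCoef s (k + 1)| * √2 := by
      intro k
      rw [norm_mul]
      exact mul_le_mul_of_nonneg_left (phi_bound _ _) (abs_nonneg _)
    have hsx : Summable fun k : ℕ => fourierCoef s (k + 1) * phi (k + 1) x :=
      Summable.of_norm_bounded (hsum.mul_right _) hb
    rw [hx, hproj, ← hsx.sum_add_tsum_nat_add D, add_sub_cancel_left]
    have ht : Summable fun k : ℕ => ((k + D + 1 : ℕ) : ℝ) ^ ν * |fourierCoef s (k + D + 1)| :=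
      (summable_nat_add_iff (f := fun k : ℕ => ((k + 1 : ℕ) : ℝ) ^ ν * |fourierCoef s (k + 1)|)
        D).2 hs_sum
    have hle : (∑' k : ℕ, ((k + D + 1 : ℕ) : ℝ) ^ ν * |fourierCoef s (k + D + 1)|) ≤ L₁ := by
      refine le_trans ?_ hs_L₁
      rw [← hs_sum.sum_add_tsum_nat_add D]
      exact le_add_of_nonneg_left (Finset.sum_nonneg fun k _ => by positivity)
    refine (tsum_of_norm_bounded (ht.mul_left (√2 / (D:ℝ)^ν)).hasSum (fun k => ?_)).trans ?_
    · refine (hb _).trans ?_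
      have h3 : (D:ℝ) ^ ν ≤ ((k + D + 1 : ℕ) : ℝ) ^ ν :=
        Real.rpow_le_rpow hD0.le (by exact_mod_cast (by omega)) hν.le
      rw [div_mul_eq_mul_div, le_div_iff₀ hDν]
      have := mul_le_mul_of_nonneg_left h3
        (mul_nonneg (abs_nonneg (fourierCoef s (k + D + 1))) (Real.sqrt_nonneg 2))
      linarith
    · rw [tsum_mul_left, div_mul_eq_mul_div]
      gcongr
  have h1e : eLpNorm (fun x => s x - trigProj D s x) ∞ unif ≤
      ENNReal.ofReal (√2 * L₁ / (D : ℝ) ^ ν) := by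
    rw [eLpNorm_exponent_top]
    exact eLpNormEssSup_le_of_ae_bound hptw
  have h1 : (eLpNorm (fun x => s x - trigProj D s x) ∞ unif).toReal ≤
      √2 * L₁ / (D : ℝ) ^ ν := ENNReal.toReal_le_of_le_ofReal (by positivity) h1e
  have hpc : Continuous (trigProj D s) := by
    unfold trigProj
    exact continuous_finsetSum _ fun k _ => continuous_const.mul (phi_cont k)
  have hpL : MemLp (trigProj D s) ∞ unif := by
    unfold trigProj
    refine memLp_finsetSum _ fun k _ => MemLp.const_mul ?_ _
    exact memLp_top_of_bound (phi_cont k).aestronglyMeasurable _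
      (Filter.Eventually.of_forall (phi_bound k))
  have hdL : MemLp (fun x => s x - trigProj D s x) ∞ unif := hs_bdd.sub hpL
  have h3 : L₂ / 2 ≤ (eLpNorm (trigProj D s) ∞ unif).toReal := by
    have ht : eLpNorm s ∞ unif ≤ eLpNorm (fun x => s x - trigProj D s x) ∞ unif +
        eLpNorm (trigProj D s) ∞ unif := by
      have := eLpNorm_add_le (p := ∞) hdL.1 hpL.1 le_top
      have e : (fun x => s x - trigProj D s x) + trigProj D s = s := by
        funext x; simp
      rwa [e] at this
    have := ENNReal.toReal_mono (ENNReal.add_ne_top.2 ⟨hdL.2.ne, hpL.2.ne⟩) ht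
    rw [ENNReal.toReal_add hdL.2.ne hpL.2.ne] at this
    linarith
  have hcmp : ∀ k : ℕ, ((k + 1 : ℕ) : ℝ) ^ ν * |fourierCoef (trigProj D s) (k + 1)| ≤
      ((k + 1 : ℕ) : ℝ) ^ ν * |fourierCoef s (k + 1)| := by
    intro k
    rw [coef_proj D s (k + 1) (by omega)]
    refine mul_le_mul_of_nonneg_left ?_ (by positivity)
    split_ifs
    · exact le_rfl
    · simp
  have h4 : Summable (fun k : ℕ => ((k + 1 : ℕ) : ℝ) ^ ν *
      |fourierCoef (trigProj D s) (k + 1)|) :=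
    Summable.of_nonneg_of_le (fun k => by positivity) hcmp hs_sum
  exact ⟨h1, h2, h3, h4, (h4.tsum_le_tsum hcmp hs_sum).trans hs_L₁⟩
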